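/- Let N and m be positive integers, let B > 0 and σ_w > 0, and set c = σ_w²/2 and b = B/(2m). Define the shifted Gamma density f : [c, ∞) → ℝ by f(y) = (y−c)^{m−1} exp(−(y−c)/b)/(b^m (m−1)!). Then for every γ₀ > 0, 1 − ∫_c^∞ [γ(N, N γ₀/(2y))/(N−1)!] f(y) dy = (2 m^m/(B^m (m−1)!)) · e^{m σ_w²/B} · Σ_{k=0}^{m−1} Σ_{n=0}^{N−1} C(m−1, k) (2^{k−n}/n!) (−σ_w²)^{m−1−k} (N γ₀)^n (B/(2m))^{k−n+1} Γ(k−n+1, m σ_w²/B; m N γ₀/B), where γ(s, t) = ∫₀^t u^{s−1} e^{−u} du is the lower incomplete Gamma function, C(m−1, k) is the binomial coefficient, and Γ(s, x; B') := ∫_x^∞ t^{s−1} exp(−t − B'/t) dt is the extended incomplete Gamma function. -/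

import Mathlib

open MeasureTheory

/-- The extended incomplete Gamma function
`Γ(s, x; B') = ∫ₓ^∞ t ^ (s - 1) exp (-t - B'/t) dt`. -/
noncomputable def extGamma (s x B' : ℝ) : ℝ :=
  ∫ t in Set.Ioi x, t ^ (s - 1) * Real.exp (-t - B' / t)

/-- The lower incomplete Gamma function at a positive integer shape,
`γ(N, t) = ∫₀ᵗ u ^ (N - 1) exp (-u) du`. -/
noncomputable def lowGamma (N : ℕ) (t : ℝ) : ℝ :=
  ∫ u in (0:ℝ)..t, u ^ (N - 1) * Real.exp (-u)

lemma lowGamma_aux (M : ℕ) (t : ℝ) :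
    lowGamma (M + 1) t / (Nat.factorial M : ℝ)
      = 1 - Real.exp (-t) * ∑ n ∈ Finset.range (M + 1), t ^ n / (Nat.factorial n : ℝ) := by
  have hd : ∀ M : ℕ, ∀ u : ℝ, HasDerivAt
      (fun u : ℝ => - (Real.exp (-u) * ∑ n ∈ Finset.range (M + 1), u ^ n / (Nat.factorial n : ℝ)))
      (u ^ M * Real.exp (-u) / (Nat.factorial M : ℝ)) u := by
    intro M u
    have he : HasDerivAt (fun u : ℝ => Real.exp (-u)) (-Real.exp (-u)) u := by
      simpa using (hasDerivAt_neg u).exp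
    induction M with
    | zero =>
      refine (he.neg.congr_of_eventuallyEq (Filter.Eventually.of_forall fun v => ?_)).congr_deriv ?_
      · simp
      · simp
    | succ M ih =>
      have h1 := ih.sub (he.mul ((hasDerivAt_pow (M + 1) u).div_const
        (Nat.factorial (M + 1) : ℝ)))
      refine (h1.congr_of_eventuallyEq (Filter.Eventually.of_forall fun v => ?_)).congr_deriv ?_
      · try simp only [Pi.sub_apply, Pi.mul_apply]
        rw [Finset.sum_range_succ _ (M + 1)]
        ring
      · have : (Nat.factorial M : ℝ) ≠ 0 := by positivity
        rw [Nat.factorial_succ]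
        push_cast
        have : (M : ℝ) + 1 ≠ 0 := by positivity
        try simp only [Nat.add_sub_cancel]
        field_simp
        ring
  have := intervalIntegral.integral_eq_sub_of_hasDerivAt (a := 0) (b := t)
    (fun x _ => hd M x) (by apply Continuous.intervalIntegrable; fun_prop)
  rw [intervalIntegral.integral_div] at this
  unfold lowGamma
  rw [Nat.add_sub_cancel, this]
  simp [Finset.sum_range_succ']
  ring

lemma ext_integrable (s x A : ℝ) (hx : 0 < x) (hA : 0 ≤ A) :
    IntegrableOn (fun t : ℝ => t ^ s * Real.exp (-t - A / t)) (Set.Ioi x) := by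
  refine integrable_of_isBigO_exp_neg (b := 1 / 2) (by norm_num) ?_ ?_
  · intro t ht
    have ht0 : t ≠ 0 := (lt_of_lt_of_le hx ht).ne'
    apply ContinuousAt.continuousWithinAt
    refine (Real.continuousAt_rpow_const _ _ (Or.inl ht0)).mul ?_
    fun_prop (disch := assumption)
  · refine Asymptotics.IsBigO.trans ?_ (Real.Gamma_integrand_isLittleO s).isBigO
    refine Asymptotics.IsBigO.of_bound 1 ?_
    filter_upwards [Filter.eventually_gt_atTop 0] with t ht
    rw [one_mul, norm_mul, norm_mul, mul_comm]
    gcongr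
    rw [Real.norm_eq_abs, Real.norm_eq_abs, Real.abs_exp, Real.abs_exp]
    apply Real.exp_le_exp.2
    have : 0 ≤ A / t := by positivity
    linarith

lemma gamma_shift (M : ℕ) (x : ℝ) :
    IntegrableOn (fun t : ℝ => (t - x) ^ M * Real.exp (-(t - x))) (Set.Ioi x) ∧
    ∫ t in Set.Ioi x, (t - x) ^ M * Real.exp (-(t - x)) = (Nat.factorial M : ℝ) := by
  have hp := measurePreserving_sub_right (volume : Measure ℝ) x
  have he : MeasurableEmbedding (fun t : ℝ => t - x) :=
    (MeasurableEquiv.subRight x).measurableEmbedding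
  have hpre : (fun t : ℝ => t - x) ⁻¹' (Set.Ioi 0) = Set.Ioi x := by
    ext t; simp
  have hpos : (0:ℝ) < M + 1 := by positivity
  have hcongr : Set.EqOn (fun t : ℝ => Real.exp (-t) * t ^ ((M + 1 : ℝ) - 1))
      (fun t : ℝ => t ^ M * Real.exp (-t)) (Set.Ioi 0) := by
    intro t _
    simp [mul_comm]
  constructor
  · have := (hp.integrableOn_comp_preimage he (f := fun t : ℝ => t ^ M * Real.exp (-t))
      (s := Set.Ioi 0)).2
      ((Real.GammaIntegral_convergent hpos).congr_fun hcongr measurableSet_Ioi)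
    rw [hpre] at this
    exact this
  · have := hp.setIntegral_preimage_emb he (fun t : ℝ => t ^ M * Real.exp (-t)) (Set.Ioi 0)
    rw [hpre] at this
    rw [this, ← setIntegral_congr_fun measurableSet_Ioi hcongr, ← Real.Gamma_eq_integral hpos,
      Real.Gamma_nat_eq_factorial]

lemma term_aux (k j n : ℕ) (b c g t C F G E X : ℝ) (M : ℝ) (hb : b ≠ 0) (ht : 0 < t)
    (hM : M ≠ 0) (hF : F ≠ 0) (hG : G ≠ 0) :
    b * (X * ((g / (2 * (b * t))) ^ n / F)
      * ((b * t) ^ k * (-c) ^ j * C * E / (b ^ (k + j + 1) * G)))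
    = (2 * M ^ (k + j + 1) / ((2 * M * b) ^ (k + j + 1) * G)) *
        (C * ((2 : ℝ) ^ ((k : ℤ) - n) / F) * (2 * (-c)) ^ j * g ^ n * b ^ ((k : ℤ) - n + 1)
          * (t ^ ((k : ℝ) - n + 1 - 1) * (E * X))) := by
  rw [add_sub_cancel_right, Real.rpow_sub ht, Real.rpow_natCast, Real.rpow_natCast,
    zpow_add_one₀ hb, zpow_sub₀ hb, zpow_sub₀ two_ne_zero]
  simp only [zpow_natCast, mul_pow, div_pow]
  field_simp
  ring

/-- Special Case 2 (single active primary user) of the paper's Theorem 1: with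
`c = σ_w² / 2`, `b = B / (2 m)` and the shifted Gamma density
`f y = (y - c)^(m-1) exp (-(y - c)/b) / (bᵐ (m-1)!)` on `[c, ∞)`, the detection
probability `1 - ∫_c^∞ γ(N, N γ₀ / (2 y)) / (N-1)! · f y dy` equals the stated
closed form in terms of the extended incomplete Gamma function. -/
theorem detection_probability_single_PU (N m : ℕ) (hN : 0 < N) (hm : 0 < m)
    (B σw : ℝ) (hB : 0 < B) (hσw : 0 < σw)
    (c b : ℝ) (hc : c = σw ^ 2 / 2) (hb : b = B / (2 * m))
    (f : ℝ → ℝ)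
    (hf : ∀ y, f y = (y - c) ^ (m - 1) * Real.exp (-(y - c) / b)
        / (b ^ m * (Nat.factorial (m - 1) : ℝ))) :
    ∀ γ₀ : ℝ, 0 < γ₀ →
      1 - (∫ y in Set.Ioi c, (lowGamma N ((N : ℝ) * γ₀ / (2 * y))
            / (Nat.factorial (N - 1) : ℝ)) * f y)
        = (2 * (m : ℝ) ^ m / (B ^ m * (Nat.factorial (m - 1) : ℝ)))
            * Real.exp ((m : ℝ) * σw ^ 2 / B)
            * ∑ k ∈ Finset.range m, ∑ n ∈ Finset.range N,
                ((m - 1).choose k : ℝ)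
                  * ((2 : ℝ) ^ ((k : ℤ) - n) / (Nat.factorial n : ℝ))
                  * (-σw ^ 2) ^ (m - 1 - k) * ((N : ℝ) * γ₀) ^ n
                  * (B / (2 * m)) ^ ((k : ℤ) - n + 1)
                  * extGamma ((k : ℝ) - n + 1) ((m : ℝ) * σw ^ 2 / B)
                      ((m : ℝ) * N * γ₀ / B) := by
  intro γ₀ hγ
  obtain ⟨M, rfl⟩ : ∃ M, N = M + 1 := ⟨N - 1, by omega⟩
  have hm' : (0:ℝ) < m := by exact_mod_cast hm
  have hb0 : 0 < b := by rw [hb]; positivity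
  have hc0 : 0 < c := by rw [hc]; positivity
  have hBb : B = 2 * m * b := by rw [hb]; field_simp
  set g : ℝ := ((M + 1 : ℕ) : ℝ) * γ₀ with hg
  have hg0 : 0 < g := by positivity
  set x : ℝ := (m : ℝ) * σw ^ 2 / B with hx
  have hx0 : 0 < x := by positivity
  have hbx : b * x = c := by rw [hx, hb, hc]; field_simp
  set A : ℝ := (m : ℝ) * ((M + 1 : ℕ) : ℝ) * γ₀ / B with hA
  have hA0 : 0 < A := by positivity
  have hAg : ∀ t : ℝ, g / (2 * (b * t)) = A / t := by
    intro t
    rw [hA, hg, hBb]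
    by_cases ht : t = 0
    · simp [ht]
    field_simp
  have hσ : -σw ^ 2 = 2 * (-c) := by rw [hc]; ring
  -- the two integrands after rescaling
  have hfact : (Nat.factorial (m - 1) : ℝ) ≠ 0 := by positivity
  have hfb : ∀ t, f (b * t) = (b * (Nat.factorial (m - 1) : ℝ))⁻¹ *
      ((t - x) ^ (m - 1) * Real.exp (-(t - x))) := by
    intro t
    rw [hf, ← hbx, ← mul_sub, mul_pow]
    have h1 : -(b * (t - x)) / b = -(t - x) := by field_simp
    have h2 : b ^ m = b ^ (m - 1) * b := by rw [← pow_succ]; congr 1; omega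
    rw [h1, h2]
    field_simp
  obtain ⟨hgi, hgv⟩ := gamma_shift (m - 1) x
  have hfi : IntegrableOn f (Set.Ioi c) := by
    rw [← hbx, ← integrableOn_Ioi_comp_mul_left_iff f x hb0]
    simp_rw [hfb]
    exact hgi.const_mul _
  have hfv : ∫ y in Set.Ioi c, f y = 1 := by
    rw [← hbx, ← integral_comp_mul_left_Ioi' f x hb0]
    simp_rw [hfb]
    rw [integral_const_mul, hgv, smul_eq_mul]
    field_simp
  set Q : ℝ → ℝ := fun y => Real.exp (-(g / (2 * y))) *
    ∑ n ∈ Finset.range (M + 1), (g / (2 * y)) ^ n / (Nat.factorial n : ℝ) with hQ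
  set K : ℝ := (2 * (m : ℝ) ^ m / (B ^ m * (Nat.factorial (m - 1) : ℝ))) * Real.exp x with hK
  set co : ℕ → ℕ → ℝ := fun k n => ((m - 1).choose k : ℝ)
                  * ((2 : ℝ) ^ ((k : ℤ) - n) / (Nat.factorial n : ℝ))
                  * (-σw ^ 2) ^ (m - 1 - k) * g ^ n
                  * (B / (2 * m)) ^ ((k : ℤ) - n + 1) with hco
  set h : ℕ → ℕ → ℝ → ℝ := fun k n t =>
    t ^ ((k : ℝ) - n + 1 - 1) * Real.exp (-t - A / t) with hh
  have hhi : ∀ k n, IntegrableOn (h k n) (Set.Ioi x) := fun k n =>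
    ext_integrable _ x A hx0 hA0.le
  have hpt : Set.EqOn (fun t => b * (Q (b * t) * f (b * t)))
      (fun t => K * ∑ k ∈ Finset.range m, ∑ n ∈ Finset.range (M + 1), co k n * h k n t)
      (Set.Ioi x) := by
    intro t ht
    have ht0 : 0 < t := hx0.trans ht
    have hexp : Real.exp (-t - A / t) * Real.exp x
        = Real.exp (-(b * t - c) / b) * Real.exp (-(g / (2 * (b * t)))) := by
      rw [← Real.exp_add, ← Real.exp_add, hAg, ← hbx]
      congr 1
      field_simp
      ring
    have hbin : (b * t - c) ^ (m - 1) = ∑ k ∈ Finset.range m,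
        (b * t) ^ k * (-c) ^ (m - 1 - k) * ((m - 1).choose k : ℝ) := by
      rw [sub_eq_add_neg, add_pow, Nat.sub_add_cancel hm]
    simp only [hQ]
    rw [hf, hbin, Finset.sum_mul, Finset.sum_div, Finset.mul_sum, Finset.mul_sum, Finset.mul_sum,
      Finset.mul_sum]
    refine Finset.sum_congr rfl fun k hk => ?_
    rw [Finset.sum_mul, Finset.mul_sum, Finset.mul_sum]
    refine Finset.sum_congr rfl fun n hn => ?_
    obtain ⟨j, hj⟩ : ∃ j, m = k + j + 1 := ⟨m - 1 - k, by
      have := Finset.mem_range.1 hk; omega⟩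
    have hj' : m - 1 - k = j := by omega
    have := term_aux k j n b c g t ((m - 1).choose k : ℝ) (Nat.factorial n : ℝ)
      (Nat.factorial (m - 1) : ℝ) (Real.exp (-(b * t - c) / b))
      (Real.exp (-(g / (2 * (b * t))))) m hb0.ne' ht0 hm'.ne' (by positivity) hfact
    rw [← hj, ← hexp, ← hBb, ← hσ] at this
    simp only [hK, hco, hh, hj', ← hb]
    rw [this]
    ring
  have hsi : ∀ k, IntegrableOn (fun t => ∑ n ∈ Finset.range (M + 1), co k n * h k n t)
      (Set.Ioi x) := fun k =>
    integrable_finsetSum _ fun n _ => (hhi k n).const_mul _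
  have hti : IntegrableOn (fun t => K * ∑ k ∈ Finset.range m,
      ∑ n ∈ Finset.range (M + 1), co k n * h k n t) (Set.Ioi x) :=
    (integrable_finsetSum _ fun k _ => hsi k).const_mul _
  have hQi : IntegrableOn (fun y => Q y * f y) (Set.Ioi c) := by
    rw [← hbx, ← integrableOn_Ioi_comp_mul_left_iff (fun y => Q y * f y) x hb0]
    have := (hti.congr_fun hpt.symm measurableSet_Ioi).const_mul b⁻¹
    refine this.congr (Filter.Eventually.of_forall fun t => ?_)
    simp only
    field_simp
  have hQv : ∫ y in Set.Ioi c, Q y * f y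
      = K * ∑ k ∈ Finset.range m, ∑ n ∈ Finset.range (M + 1), co k n * extGamma (k - n + 1) x A := by
    rw [← hbx, ← integral_comp_mul_left_Ioi' (fun y => Q y * f y) x hb0, smul_eq_mul,
      ← integral_const_mul, setIntegral_congr_fun measurableSet_Ioi hpt, integral_const_mul,
      integral_finsetSum _ fun k _ => hsi k]
    congr 1
    refine Finset.sum_congr rfl fun k _ => ?_
    rw [integral_finsetSum _ fun n _ => (hhi k n).const_mul _]
    refine Finset.sum_congr rfl fun n _ => ?_
    rw [integral_const_mul]
    rfl
  have hL : ∀ y, lowGamma (M + 1) (g / (2 * y)) / (Nat.factorial (M + 1 - 1) : ℝ) * f y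
      = f y - Q y * f y := by
    intro y
    rw [Nat.add_sub_cancel, lowGamma_aux]
    simp only [hQ]
    ring
  simp_rw [hL]
  rw [integral_sub hfi hQi, hfv, hQv]
  ring
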